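/- Let K be a simplicial complex with finitely many faces in a finite-dimensional real normed vector space E, give |K| ⊆ E the subspace topology, let x ∈ |K|, and let σ be the (unique) face of K whose combinatorial interior contains x. Then |K| ∖ st̊(σ) is a strong deformation retract of |K| ∖ {x}: there exist a continuous map r : |K| ∖ {x} → |K| ∖ st̊(σ) with r(y) = y for all y ∈ |K| ∖ st̊(σ), and a continuous homotopy H : (|K| ∖ {x}) × [0,1] → |K| ∖ {x} with H(y,0) = y and H(y,1) = r(y) for all y, and H(y,t) = y for all t whenever y ∈ |K| ∖ st̊(σ). -/

import Mathlib

variable {E : Type*} [NormedAddCommGroup E] [NormedSpace ℝ E] [FiniteDimensional ℝ E]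

/-- The combinatorial interior of a finite set `s`: the convex hull of `s` minus the
convex hulls of all nonempty proper subsets of `s`. -/
def combInterior (s : Finset E) : Set E :=
  convexHull ℝ (s : Set E) \
    ⋃ (t : Finset E) (_ : t ⊂ s) (_ : t.Nonempty), convexHull ℝ (t : Set E)

/-- The open star of a face `τ` of a simplicial complex `K`: the union of the
combinatorial interiors of all faces of `K` containing `τ`. -/
def openStar (K : Geometry.SimplicialComplex ℝ E) (τ : Finset E) : Set E :=
  ⋃ (s : Finset E) (_ : s ∈ K.faces) (_ : τ ⊆ s), combInterior s

/-!
A point of `|K|` is determined by its barycentric coordinates, and the face carrying it is their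
support; so a point lies in the open star of `σ` exactly when its support contains `σ`. Let `σ` be
the face carrying `x`. Removing from the coordinates of `y ≠ x` the largest possible multiple of
those of `x`, and normalizing, pushes `y` away from `x` until a coordinate at a vertex of `σ`
vanishes, that is, until it leaves the open star. The point `y` lies on the segment from `x` to its
image, so the straight-line homotopy stays in the face carrying `y` and never meets `x`.
Coordinates are continuous on each face, which is a quotient of a standard simplex by compactness,
and hence on `|K|` by local finiteness.
-/

theorem support_subset_support_of_nonneg_of_le {ι M : Type*} [Zero M] [PartialOrder M]
    {a b : ι →₀ M} (hb : 0 ≤ b) (hba : b ≤ a) : b.support ⊆ a.support := by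
  intro i hi
  have hbi : 0 < b i := (hb i).lt_of_ne' (Finsupp.mem_support_iff.1 hi)
  exact Finsupp.mem_support_iff.2 (hbi.trans_le (hba i)).ne'

section MinRatio

variable {ι 𝕜 : Type*} [Field 𝕜] [LinearOrder 𝕜]

/-- The smallest ratio `a i / b i` over the support of `b`. For nonnegative weights this is the
largest scalar `c` such that `c • b ≤ a`. -/
def minRatio (a b : ι →₀ 𝕜) (hb : b.support.Nonempty) : 𝕜 :=
  b.support.inf' hb fun i => a i / b i

variable {a b : ι →₀ 𝕜} (hne : b.support.Nonempty)

theorem exists_mem_support_minRatio_mul_eq : ∃ i ∈ b.support, minRatio a b hne * b i = a i := by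
  obtain ⟨i, hi, h⟩ := b.support.exists_mem_eq_inf' hne fun i => a i / b i
  exact ⟨i, hi, by rw [minRatio, h, div_mul_cancel₀ _ (Finsupp.mem_support_iff.1 hi)]⟩

variable [IsStrictOrderedRing 𝕜]

theorem minRatio_nonneg (ha : 0 ≤ a) (hb : 0 ≤ b) : 0 ≤ minRatio a b hne :=
  Finset.le_inf' _ _ fun i _ => div_nonneg (ha i) (hb i)

theorem minRatio_smul_le (ha : 0 ≤ a) (hb : 0 ≤ b) : minRatio a b hne • b ≤ a := by
  intro i
  by_cases hi : b i = 0
  · simpa [hi] using ha i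
  · have hle : minRatio a b hne ≤ a i / b i :=
      Finset.inf'_le (fun i => a i / b i) (Finsupp.mem_support_iff.2 hi)
    exact (le_div_iff₀ ((hb i).lt_of_ne' hi)).1 hle

theorem minRatio_eq_zero (ha : 0 ≤ a) (hb : 0 ≤ b) (h : ¬ b.support ⊆ a.support) :
    minRatio a b hne = 0 := by
  obtain ⟨i, hbi, hai⟩ := Finset.not_subset.1 h
  refine le_antisymm ?_ (minRatio_nonneg hne ha hb)
  have hle : minRatio a b hne ≤ a i / b i := Finset.inf'_le (fun i => a i / b i) hbi
  rwa [Finsupp.notMem_support_iff.1 hai, zero_div] at hle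

theorem minRatio_lt_one (ha : 0 ≤ a) (hb : 0 ≤ b)
    (hsum : (a.sum fun _ c => c) = b.sum fun _ c => c) (hab : a ≠ b) :
    minRatio a b hne < 1 := by
  by_contra! h
  have hle : b ≤ a := fun i =>
    (le_mul_of_one_le_left (hb i) h).trans (minRatio_smul_le hne ha hb i)
  have hsub : b.support ⊆ a.support := support_subset_support_of_nonneg_of_le hb hle
  have heq : ∑ i ∈ a.support, b i = ∑ i ∈ a.support, a i :=
    (Finsupp.sum_of_support_subset b hsub _ fun _ _ => rfl).symm.trans hsum.symm
  refine hab (Finsupp.ext fun i => ?_)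
  by_cases hi : i ∈ a.support
  · exact ((Finset.sum_eq_sum_iff_of_le fun i _ => hle i).1 heq i hi).symm
  · rw [Finsupp.notMem_support_iff.1 hi, Finsupp.notMem_support_iff.1 fun h => hi (hsub h)]

end MinRatio

section BarycentricWeight

variable {𝕜 V : Type*} [Field 𝕜] [LinearOrder 𝕜] [AddCommGroup V] [Module 𝕜 V]

/-- `a` is a finitely supported system of convex weights on points of `V` with barycentre `y`.
The points carrying the weights are recorded only through the support of `a`, so that weights on
different simplices can be compared. -/
structure IsBarycentricWeight (a : V →₀ 𝕜) (y : V) : Prop where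
  nonneg : 0 ≤ a
  sum_eq_one : (a.sum fun _ c => c) = 1
  sum_smul_eq : (a.sum fun v c => c • v) = y

variable {a b : V →₀ 𝕜} {x y : V} {s : Finset V}

theorem isBarycentricWeight_iff_of_support_subset (has : a.support ⊆ s) :
    IsBarycentricWeight a y ↔ 0 ≤ a ∧ ∑ v ∈ s, a v = 1 ∧ ∑ v ∈ s, a v • v = y := by
  have hsum : (a.sum fun _ c => c) = ∑ v ∈ s, a v :=
    Finsupp.sum_of_support_subset a has _ fun _ _ => rfl
  have hsmul : (a.sum fun v c => c • v) = ∑ v ∈ s, a v • v :=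
    Finsupp.sum_of_support_subset a has _ fun v _ => zero_smul 𝕜 v
  rw [← hsum, ← hsmul]
  exact ⟨fun h => ⟨h.nonneg, h.sum_eq_one, h.sum_smul_eq⟩, fun ⟨h₀, h₁, h₂⟩ => ⟨h₀, h₁, h₂⟩⟩

theorem isBarycentricWeight_indicator {w : s → 𝕜} (hw : w ∈ stdSimplex 𝕜 s) :
    IsBarycentricWeight (Finsupp.indicator s fun v hv => w ⟨v, hv⟩) (∑ v, w v • (v : V)) := by
  rw [isBarycentricWeight_iff_of_support_subset (Finsupp.support_indicator_subset _ _)]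
  refine ⟨fun v => ?_, ?_, ?_⟩
  · by_cases hv : v ∈ s
    · exact (hw.1 ⟨v, hv⟩).trans_eq (Finsupp.indicator_of_mem hv fun v hv => w ⟨v, hv⟩).symm
    · exact (Finsupp.indicator_of_notMem hv _).ge
  · rw [← hw.2, ← Finset.sum_coe_sort]
    exact Finset.sum_congr rfl fun v _ => Finsupp.indicator_of_mem v.2 _
  · rw [← Finset.sum_coe_sort]
    exact Finset.sum_congr rfl fun v _ => by rw [Finsupp.indicator_of_mem v.2]

namespace IsBarycentricWeight

theorem support_nonempty (ha : IsBarycentricWeight a y) : a.support.Nonempty := by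
  rw [Finsupp.support_nonempty_iff]
  rintro rfl
  simpa using ha.sum_eq_one

theorem eq_of_affineIndependent (hs : AffineIndependent 𝕜 ((↑) : s → V))
    (ha : IsBarycentricWeight a y) (hb : IsBarycentricWeight b y)
    (has : a.support ⊆ s) (hbs : b.support ⊆ s) : a = b := by
  obtain ⟨-, hsuma, hsmula⟩ := (isBarycentricWeight_iff_of_support_subset has).1 ha
  obtain ⟨-, hsumb, hsmulb⟩ := (isBarycentricWeight_iff_of_support_subset hbs).1 hb
  refine Finsupp.ext fun v => ?_
  by_cases hv : v ∈ s
  · exact hs.eq_of_sum_eq_sum_subtype (hsuma.trans hsumb.symm) (hsmula.trans hsmulb.symm) v hv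
  · rw [Finsupp.notMem_support_iff.1 fun h => hv (has h),
      Finsupp.notMem_support_iff.1 fun h => hv (hbs h)]

variable [IsStrictOrderedRing 𝕜]

theorem inv_one_sub_smul_sub {c : 𝕜} (ha : IsBarycentricWeight a y) (hb : IsBarycentricWeight b x)
    (hc : c < 1) (hle : c • b ≤ a) :
    IsBarycentricWeight ((1 - c)⁻¹ • (a - c • b)) ((1 - c)⁻¹ • (y - c • x)) where
  nonneg := smul_nonneg (inv_nonneg.2 (sub_nonneg.2 hc.le)) (sub_nonneg.2 hle)
  sum_eq_one := by
    have h (w : V →₀ 𝕜) : (w.sum fun _ c => c) = Finsupp.linearCombination 𝕜 (fun _ => 1) w := by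
      simp [Finsupp.linearCombination_apply]
    rw [h, map_smul, map_sub, map_smul, ← h, ← h, ha.sum_eq_one, hb.sum_eq_one, smul_eq_mul,
      smul_eq_mul, mul_one, inv_mul_cancel₀ (sub_pos.2 hc).ne']
  sum_smul_eq := by
    have h (w : V →₀ 𝕜) : (w.sum fun v c => c • v) = Finsupp.linearCombination 𝕜 id w := rfl
    rw [h, map_smul, map_sub, map_smul, ← h, ← h, ha.sum_smul_eq, hb.sum_smul_eq]

end IsBarycentricWeight

variable [IsStrictOrderedRing 𝕜]

theorem mem_convexHull_iff_exists_mem_stdSimplex :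
    y ∈ convexHull 𝕜 (s : Set V) ↔ ∃ w ∈ stdSimplex 𝕜 s, ∑ v, w v • (v : V) = y := by
  constructor
  · intro hy
    obtain ⟨w, hw, hsum, hsmul⟩ := Finset.mem_convexHull'.1 hy
    refine ⟨fun v => w v, ⟨fun v => hw v v.2, ?_⟩, ?_⟩
    · rwa [Finset.sum_coe_sort s w]
    · rwa [Finset.sum_coe_sort s fun v => w v • v]
  · rintro ⟨w, hw, hsmul⟩
    exact mem_convexHull_of_exists_fintype w (↑) hw.1 hw.2 (fun v => v.2) hsmul

theorem mem_convexHull_iff_exists_isBarycentricWeight :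
    y ∈ convexHull 𝕜 (s : Set V) ↔ ∃ a : V →₀ 𝕜, IsBarycentricWeight a y ∧ a.support ⊆ s := by
  constructor
  · intro hy
    obtain ⟨w, hw, rfl⟩ := mem_convexHull_iff_exists_mem_stdSimplex.1 hy
    exact ⟨_, isBarycentricWeight_indicator hw, Finsupp.support_indicator_subset _ _⟩
  · rintro ⟨a, ha, has⟩
    obtain ⟨hnonneg, hsum, hsmul⟩ := (isBarycentricWeight_iff_of_support_subset has).1 ha
    exact Finset.mem_convexHull'.2 ⟨a, fun v _ => hnonneg v, hsum, hsmul⟩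

end BarycentricWeight

section BaryCoord

open Geometry

variable {𝕜 V : Type*} [Field 𝕜] [LinearOrder 𝕜] [AddCommGroup V] [Module 𝕜 V]
  {K : SimplicialComplex 𝕜 V} {a b : V →₀ 𝕜} {s : Finset V} {y : V}

open scoped Classical in
/-- The barycentric coordinates of a point `y` of `|K|`, as weights on the vertices of the face
carrying `y`. Outside `|K|` the value is `0`. -/
noncomputable def baryCoord (K : SimplicialComplex 𝕜 V) (y : V) : V →₀ 𝕜 :=
  if h : ∃ a : V →₀ 𝕜, IsBarycentricWeight a y ∧ a.support ∈ K.faces then h.choose else 0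

theorem IsBarycentricWeight.support_mem_faces (ha : IsBarycentricWeight a y) (hs : s ∈ K.faces)
    (has : a.support ⊆ s) : a.support ∈ K.faces :=
  K.down_closed hs has ha.support_nonempty

variable [IsStrictOrderedRing 𝕜]

theorem IsBarycentricWeight.eq_of_mem_faces (ha : IsBarycentricWeight a y)
    (hb : IsBarycentricWeight b y) (has : a.support ∈ K.faces) (hbs : b.support ∈ K.faces) :
    a = b := by
  classical
  have hya := mem_convexHull_iff_exists_isBarycentricWeight.2 ⟨a, ha, subset_rfl⟩
  have hyb := mem_convexHull_iff_exists_isBarycentricWeight.2 ⟨b, hb, subset_rfl⟩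
  have hy := K.inter_subset_convexHull has hbs ⟨hya, hyb⟩
  rw [← Finset.coe_inter] at hy
  obtain ⟨c, hc, hcab⟩ := mem_convexHull_iff_exists_isBarycentricWeight.1 hy
  have hac : a = c :=
    ha.eq_of_affineIndependent (K.indep has) hc subset_rfl (hcab.trans Finset.inter_subset_left)
  have hbc : b = c :=
    hb.eq_of_affineIndependent (K.indep hbs) hc subset_rfl (hcab.trans Finset.inter_subset_right)
  exact hac.trans hbc.symm

theorem IsBarycentricWeight.baryCoord_eq (ha : IsBarycentricWeight a y)
    (has : a.support ∈ K.faces) : baryCoord K y = a := by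
  have h : ∃ a : V →₀ 𝕜, IsBarycentricWeight a y ∧ a.support ∈ K.faces := ⟨a, ha, has⟩
  rw [baryCoord, dif_pos h]
  exact h.choose_spec.1.eq_of_mem_faces ha h.choose_spec.2 has

theorem isBarycentricWeight_baryCoord_and_support_mem_faces (hy : y ∈ K.space) :
    IsBarycentricWeight (baryCoord K y) y ∧ (baryCoord K y).support ∈ K.faces := by
  obtain ⟨s, hs, hys⟩ := SimplicialComplex.mem_space_iff.1 hy
  obtain ⟨a, ha, has⟩ := mem_convexHull_iff_exists_isBarycentricWeight.1 hys
  have has' := ha.support_mem_faces hs has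
  rw [ha.baryCoord_eq has']
  exact ⟨ha, has'⟩

theorem isBarycentricWeight_baryCoord (hy : y ∈ K.space) : IsBarycentricWeight (baryCoord K y) y :=
  (isBarycentricWeight_baryCoord_and_support_mem_faces hy).1

theorem support_baryCoord_mem_faces (hy : y ∈ K.space) : (baryCoord K y).support ∈ K.faces :=
  (isBarycentricWeight_baryCoord_and_support_mem_faces hy).2

theorem baryCoord_injOn : Set.InjOn (baryCoord K) K.space := fun x hx y hy h => by
  rw [← (isBarycentricWeight_baryCoord hx).sum_smul_eq, h,
    (isBarycentricWeight_baryCoord hy).sum_smul_eq]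

theorem mem_convexHull_iff_support_baryCoord_subset (hs : s ∈ K.faces) (hy : y ∈ K.space) :
    y ∈ convexHull 𝕜 (s : Set V) ↔ (baryCoord K y).support ⊆ s := by
  rw [mem_convexHull_iff_exists_isBarycentricWeight]
  constructor
  · rintro ⟨a, ha, has⟩
    rwa [ha.baryCoord_eq (ha.support_mem_faces hs has)]
  · exact fun h => ⟨_, isBarycentricWeight_baryCoord hy, h⟩

end BaryCoord

section Continuity

open Geometry

variable {V : Type*} [AddCommGroup V] [Module ℝ V] [TopologicalSpace V]
  [IsTopologicalAddGroup V] [ContinuousSMul ℝ V] [T2Space V]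
  {K : SimplicialComplex ℝ V} {s : Finset V}

theorem continuousOn_baryCoord_convexHull (hs : s ∈ K.faces) (v : V) :
    ContinuousOn (fun y => baryCoord K y v) (convexHull ℝ (s : Set V)) := by
  let f : stdSimplex ℝ s → convexHull ℝ (s : Set V) := fun w =>
    ⟨∑ u, w.1 u • (u : V), mem_convexHull_iff_exists_mem_stdSimplex.2 ⟨w.1, w.2, rfl⟩⟩
  have hf : Continuous f := by
    refine (continuous_finsetSum _ fun u _ => ?_).subtype_mk _
    exact ((continuous_apply u).comp continuous_subtype_val).smul continuous_const
  have hsurj : Function.Surjective f := fun ⟨y, hy⟩ => by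
    obtain ⟨w, hw, rfl⟩ := mem_convexHull_iff_exists_mem_stdSimplex.1 hy
    exact ⟨⟨w, hw⟩, rfl⟩
  have hcoord (w : stdSimplex ℝ s) :
      baryCoord K (f w) v = Finsupp.indicator s (fun u hu => w.1 ⟨u, hu⟩) v := by
    have hw := isBarycentricWeight_indicator w.2
    rw [hw.baryCoord_eq (hw.support_mem_faces hs (Finsupp.support_indicator_subset _ _))]
  rw [continuousOn_iff_continuous_domRestrict,
    (Topology.IsQuotientMap.of_surjective_continuous hsurj hf).continuous_iff]
  refine Continuous.congr ?_ fun w => (hcoord w).symm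
  by_cases hv : v ∈ s
  · simp only [Finsupp.indicator_of_mem hv]
    exact (continuous_apply _).comp continuous_subtype_val
  · simp only [Finsupp.indicator_of_notMem hv]
    exact continuous_const

theorem continuousOn_baryCoord
    (hK : LocallyFinite fun s : K.faces =>
      ((↑) ⁻¹' convexHull ℝ (s.1 : Set V) : Set K.space)) (v : V) :
    ContinuousOn (fun y => baryCoord K y v) K.space := by
  rw [continuousOn_iff_continuous_domRestrict]
  refine hK.continuous ?_ ?_ fun s => ?_
  · refine Set.iUnion_eq_univ_iff.2 fun y => ?_
    obtain ⟨s, hs, hys⟩ := SimplicialComplex.mem_space_iff.1 y.2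
    exact ⟨⟨s, hs⟩, hys⟩
  · exact fun s => (s.1.finite_toSet.isClosed_convexHull ℝ).preimage continuous_subtype_val
  · exact (continuousOn_baryCoord_convexHull s.2 v).comp continuous_subtype_val.continuousOn
      (Set.mapsTo_preimage _ _)

end Continuity

section OpenStar

open Geometry

variable {V : Type*} [NormedAddCommGroup V] [NormedSpace ℝ V]
  {K : SimplicialComplex ℝ V} {s σ : Finset V} {y : V}

theorem mem_combInterior_iff_support_baryCoord_eq (hs : s ∈ K.faces) (hy : y ∈ K.space) :
    y ∈ combInterior s ↔ (baryCoord K y).support = s := by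
  have hcarrier := support_baryCoord_mem_faces hy
  simp only [combInterior, Set.mem_sdiff, Set.mem_iUnion, not_exists]
  constructor
  · rintro ⟨hys, hproper⟩
    have hsub := (mem_convexHull_iff_support_baryCoord_subset hs hy).1 hys
    by_contra hne
    exact hproper _ (hsub.ssubset_of_ne hne) (K.nonempty_of_mem_faces hcarrier)
      ((mem_convexHull_iff_support_baryCoord_subset hcarrier hy).2 subset_rfl)
  · rintro rfl
    refine ⟨(mem_convexHull_iff_support_baryCoord_subset hs hy).2 subset_rfl, ?_⟩
    intro t hts htne hyt
    exact hts.2 ((mem_convexHull_iff_support_baryCoord_subset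
      (K.down_closed hs hts.1 htne) hy).1 hyt)

theorem mem_openStar_iff_subset_support_baryCoord (hy : y ∈ K.space) :
    y ∈ openStar K σ ↔ σ ⊆ (baryCoord K y).support := by
  simp only [openStar, Set.mem_iUnion]
  constructor
  · rintro ⟨s, hs, hσs, hys⟩
    rwa [(mem_combInterior_iff_support_baryCoord_eq hs hy).1 hys]
  · intro hσ
    have hs := support_baryCoord_mem_faces hy
    exact ⟨_, hs, hσ, (mem_combInterior_iff_support_baryCoord_eq hs hy).2 rfl⟩

end OpenStar

section RadialProj

open Geometry

variable {𝕜 V : Type*} [Field 𝕜] [LinearOrder 𝕜] [IsStrictOrderedRing 𝕜] [AddCommGroup V]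
  [Module 𝕜 V] {K : SimplicialComplex 𝕜 V} {x y : V} (hx : x ∈ K.space)

/-- The `minRatio` of the barycentric coordinates of `y` and `x`: how much of the weight of `y`
can be attributed to `x`. -/
noncomputable def coordRatio (y : V) : 𝕜 :=
  minRatio (baryCoord K y) (baryCoord K x) (isBarycentricWeight_baryCoord hx).support_nonempty

/-- The radial projection from a point `x` of `|K|`. It moves `y` on the ray from `x` until one of
the barycentric coordinates at the vertices of the face carrying `x` vanishes. Its value at `x`
itself is the junk value `0`. -/
noncomputable def radialProj (y : V) : V :=
  (1 - coordRatio hx y)⁻¹ • (y - coordRatio hx y • x)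

theorem coordRatio_nonneg (hy : y ∈ K.space) : 0 ≤ coordRatio hx y :=
  minRatio_nonneg _ (isBarycentricWeight_baryCoord hy).nonneg
    (isBarycentricWeight_baryCoord hx).nonneg

theorem coordRatio_smul_baryCoord_le (hy : y ∈ K.space) :
    coordRatio hx y • baryCoord K x ≤ baryCoord K y :=
  minRatio_smul_le _ (isBarycentricWeight_baryCoord hy).nonneg
    (isBarycentricWeight_baryCoord hx).nonneg

theorem coordRatio_lt_one (hy : y ∈ K.space \ {x}) : coordRatio hx y < 1 := by
  have hxw := isBarycentricWeight_baryCoord hx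
  have hyw := isBarycentricWeight_baryCoord hy.1
  exact minRatio_lt_one _ hyw.nonneg hxw.nonneg (hyw.sum_eq_one.trans hxw.sum_eq_one.symm)
    (baryCoord_injOn.ne hy.1 hx hy.2)

theorem isBarycentricWeight_radialProj (hy : y ∈ K.space \ {x}) :
    IsBarycentricWeight
      ((1 - coordRatio hx y)⁻¹ • (baryCoord K y - coordRatio hx y • baryCoord K x))
      (radialProj hx y) :=
  (isBarycentricWeight_baryCoord hy.1).inv_one_sub_smul_sub (isBarycentricWeight_baryCoord hx)
    (coordRatio_lt_one hx hy) (coordRatio_smul_baryCoord_le hx hy.1)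

theorem support_inv_one_sub_smul_sub_subset (hy : y ∈ K.space) :
    ((1 - coordRatio hx y)⁻¹ • (baryCoord K y - coordRatio hx y • baryCoord K x)).support ⊆
      (baryCoord K y).support := by
  have hle := coordRatio_smul_baryCoord_le hx hy
  have hnonneg : 0 ≤ coordRatio hx y • baryCoord K x :=
    smul_nonneg (coordRatio_nonneg hx hy) (isBarycentricWeight_baryCoord hx).nonneg
  exact Finsupp.support_smul.trans <|
    support_subset_support_of_nonneg_of_le (sub_nonneg.2 hle) (sub_le_self _ hnonneg)

theorem baryCoord_radialProj (hy : y ∈ K.space \ {x}) :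
    baryCoord K (radialProj hx y) =
      (1 - coordRatio hx y)⁻¹ • (baryCoord K y - coordRatio hx y • baryCoord K x) :=
  (isBarycentricWeight_radialProj hx hy).baryCoord_eq <|
    (isBarycentricWeight_radialProj hx hy).support_mem_faces (support_baryCoord_mem_faces hy.1)
      (support_inv_one_sub_smul_sub_subset hx hy.1)

theorem radialProj_mem_convexHull (hy : y ∈ K.space \ {x}) :
    radialProj hx y ∈ convexHull 𝕜 ((baryCoord K y).support : Set V) :=
  mem_convexHull_iff_exists_isBarycentricWeight.2
    ⟨_, isBarycentricWeight_radialProj hx hy, support_inv_one_sub_smul_sub_subset hx hy.1⟩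

theorem not_support_subset_support_baryCoord_radialProj (hy : y ∈ K.space \ {x}) :
    ¬ (baryCoord K x).support ⊆ (baryCoord K (radialProj hx y)).support := by
  obtain ⟨v, hv, hratio⟩ := exists_mem_support_minRatio_mul_eq (a := baryCoord K y)
    (isBarycentricWeight_baryCoord hx).support_nonempty
  refine Finset.not_subset.2 ⟨v, hv, Finsupp.notMem_support_iff.2 ?_⟩
  rw [baryCoord_radialProj hx hy, Finsupp.smul_apply, Finsupp.sub_apply, ← hratio,
    Finsupp.smul_apply, smul_eq_mul (coordRatio hx y), coordRatio, sub_self, smul_zero]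

theorem radialProj_eq_self (hy : y ∈ K.space)
    (h : ¬ (baryCoord K x).support ⊆ (baryCoord K y).support) : radialProj hx y = y := by
  have hratio : coordRatio hx y = 0 := minRatio_eq_zero _
    (isBarycentricWeight_baryCoord hy).nonneg (isBarycentricWeight_baryCoord hx).nonneg h
  rw [radialProj, hratio, sub_zero, inv_one, one_smul, zero_smul, sub_zero]

theorem wbtw_radialProj (hy : y ∈ K.space \ {x}) : Wbtw 𝕜 x y (radialProj hx y) := by
  have hlt := coordRatio_lt_one hx hy
  refine ⟨1 - coordRatio hx y,
    ⟨sub_nonneg.2 hlt.le, sub_le_self _ (coordRatio_nonneg hx hy.1)⟩, ?_⟩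
  rw [AffineMap.lineMap_apply_module, radialProj, smul_inv_smul₀ (sub_pos.2 hlt).ne',
    sub_sub_cancel, add_sub_cancel]

theorem lineMap_radialProj_mem_space_diff_singleton (hy : y ∈ K.space \ {x}) {t : 𝕜}
    (ht : t ∈ Set.Icc 0 1) :
    AffineMap.lineMap y (radialProj hx y) t ∈ K.space \ {x} := by
  have hcarrier := support_baryCoord_mem_faces hy.1
  have hyc : y ∈ convexHull 𝕜 ((baryCoord K y).support : Set V) :=
    (mem_convexHull_iff_support_baryCoord_subset hcarrier hy.1).2 subset_rfl
  refine ⟨K.convexHull_subset_space hcarrier ?_, fun hxt => hy.2 ?_⟩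
  · exact (convex_convexHull 𝕜 _).lineMap_mem hyc (radialProj_mem_convexHull hx hy) ht
  · exact ((wbtw_swap_left_iff 𝕜 _).1 ⟨wbtw_radialProj hx hy, ⟨t, ht, hxt⟩⟩).symm

end RadialProj

section RadialProjContinuity

open Geometry

variable {V : Type*} [AddCommGroup V] [Module ℝ V] [TopologicalSpace V]
  [IsTopologicalAddGroup V] [ContinuousSMul ℝ V] [T2Space V] {K : SimplicialComplex ℝ V} {x : V}

theorem continuousOn_radialProj
    (hK : LocallyFinite fun s : K.faces =>
      ((↑) ⁻¹' convexHull ℝ (s.1 : Set V) : Set K.space)) (hx : x ∈ K.space) :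
    ContinuousOn (radialProj hx) (K.space \ {x}) := by
  have hratio : ContinuousOn (coordRatio hx) (K.space \ {x}) :=
    ContinuousOn.finset_inf'_apply (isBarycentricWeight_baryCoord hx).support_nonempty fun v _ =>
      ((continuousOn_baryCoord hK v).mono Set.sdiff_subset).div_const _
  refine ContinuousOn.smul (ContinuousOn.inv₀ (by fun_prop) fun y hy => ?_) (by fun_prop)
  exact (sub_pos.2 (coordRatio_lt_one hx hy)).ne'

end RadialProjContinuity

theorem radialProj_mem_space_diff_openStar {V : Type*} [NormedAddCommGroup V] [NormedSpace ℝ V]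
    {K : Geometry.SimplicialComplex ℝ V} {x y : V} (hx : x ∈ K.space) (hy : y ∈ K.space \ {x}) :
    radialProj hx y ∈ K.space \ openStar K (baryCoord K x).support := by
  have hmem : radialProj hx y ∈ K.space :=
    K.convexHull_subset_space (support_baryCoord_mem_faces hy.1) (radialProj_mem_convexHull hx hy)
  exact ⟨hmem, mt (mem_openStar_iff_subset_support_baryCoord hmem).1
    (not_support_subset_support_baryCoord_radialProj hx hy)⟩

theorem space_diff_openStar_deformationRetract_general {V : Type*} [NormedAddCommGroup V]
    [NormedSpace ℝ V] (K : Geometry.SimplicialComplex ℝ V)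
    (hK : LocallyFinite fun s : K.faces =>
      ((↑) ⁻¹' convexHull ℝ (s.1 : Set V) : Set K.space))
    (x : V) (σ : Finset V) (hσ : σ ∈ K.faces) (hxσ : x ∈ combInterior σ) :
    ∃ (r : C(↥(K.space \ {x}), ↥(K.space \ openStar K σ)))
      (H : C(↥(K.space \ {x}) × unitInterval, ↥(K.space \ {x}))),
      (∀ y : ↥(K.space \ {x}), (y : V) ∈ K.space \ openStar K σ → ((r y : V) = (y : V))) ∧
      (∀ y : ↥(K.space \ {x}), H (y, 0) = y) ∧
      (∀ y : ↥(K.space \ {x}), ((H (y, 1) : V) = (r y : V))) ∧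
      (∀ y : ↥(K.space \ {x}), (y : V) ∈ K.space \ openStar K σ →
        ∀ t : unitInterval, H (y, t) = y) := by
  have hx : x ∈ K.space := K.convexHull_subset_space hσ hxσ.1
  obtain rfl : (baryCoord K x).support = σ :=
    (mem_combInterior_iff_support_baryCoord_eq hσ hx).1 hxσ
  have hcont : Continuous fun y : ↥(K.space \ {x}) => radialProj hx y :=
    (continuousOn_radialProj hK hx).domRestrict
  have hfix (y : V) (hy : y ∈ K.space \ openStar K (baryCoord K x).support) :
      radialProj hx y = y :=
    radialProj_eq_self hx hy.1 (mt (mem_openStar_iff_subset_support_baryCoord hy.1).2 hy.2)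
  have hseg (p : ↥(K.space \ {x}) × unitInterval) :=
    lineMap_radialProj_mem_space_diff_singleton hx p.1.2 p.2.2
  have hproj (y : ↥(K.space \ {x})) : radialProj hx y ∈ K.space \ openStar K _ :=
    radialProj_mem_space_diff_openStar hx y.2
  refine ⟨⟨fun y => ⟨_, hproj y⟩, hcont.subtype_mk _⟩, ⟨fun p => ⟨_, hseg p⟩, ?_⟩, ?_, ?_, ?_, ?_⟩
  · exact ((continuous_subtype_val.comp continuous_fst).lineMap (hcont.comp continuous_fst)
      (continuous_subtype_val.comp continuous_snd)).subtype_mk _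
  · exact fun y hy => hfix y hy
  · exact fun y => Subtype.ext (AffineMap.lineMap_apply_zero _ _)
  · exact fun y => AffineMap.lineMap_apply_one _ _
  · intro y hy t
    have hline : AffineMap.lineMap (y : V) (radialProj hx y) (t : ℝ) = y := by
      rw [hfix y hy, AffineMap.lineMap_same_apply]
    exact Subtype.ext hline

/-- For a finite simplicial complex `K` in a finite-dimensional real normed space,
a point `x ∈ |K|` lying in the combinatorial interior of the face `σ`, the complement
`|K| ∖ st̊(σ)` is a strong deformation retract of `|K| ∖ {x}`. -/
theorem space_diff_openStar_deformationRetract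
    (K : Geometry.SimplicialComplex ℝ E) (hfin : K.faces.Finite)
    (x : E) (hx : x ∈ K.space) (σ : Finset E) (hσ : σ ∈ K.faces)
    (hxσ : x ∈ combInterior σ) :
    ∃ (r : C(↥(K.space \ {x}), ↥(K.space \ openStar K σ)))
      (H : C(↥(K.space \ {x}) × unitInterval, ↥(K.space \ {x}))),
      (∀ y : ↥(K.space \ {x}), (y : E) ∈ K.space \ openStar K σ → ((r y : E) = (y : E))) ∧
      (∀ y : ↥(K.space \ {x}), H (y, 0) = y) ∧
      (∀ y : ↥(K.space \ {x}), ((H (y, 1) : E) = (r y : E))) ∧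
      (∀ y : ↥(K.space \ {x}), (y : E) ∈ K.space \ openStar K σ →
        ∀ t : unitInterval, H (y, t) = y) := by
  have := hfin.to_subtype
  exact space_diff_openStar_deformationRetract_general K (locallyFinite_of_finite _) x σ hσ hxσ
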